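/- arXiv:2506.07068 — 2 statements merged into one kernel-verified Lean document; each statement's English description precedes it below -/
import Mathlib

section
/- (Lemma 1) Let ω : ℝ → ℝ³ be continuous, let R : ℝ → SO(3) be differentiable with Ṙ(t) = R(t)[ω(t)]×, and for i = 1, …, q let aᵢ, bᵢ : ℝ → ℝ³ be continuous. Define A(t) := −(I₃ ⊗ [ω(t)]×), let C(t) be the q×9 matrix with i-th row bᵢ(t)ᵀ ⊗ aᵢ(t)ᵀ, and let φ(t,s) := (I₃ ⊗ R(t))ᵀ (I₃ ⊗ R(s)) be the state transition matrix of ẋ = A(t)x. Then the following are equivalent: (a) there exist δ, μ > 0 such that for every t ≥ 0 the observability Gramian W(t, t+δ) := (1/δ) ∫_t^{t+δ} φ(s,t)ᵀ C(s)ᵀ C(s) φ(s,t) ds satisfies W(t, t+δ) ⪰ μ I₉; (b) there exist δ, μ > 0 such that for every t ≥ 0, ∫_t^{t+δ} Σ_{i=1}^{q} uᵢ(s) uᵢ(s)ᵀ ds ⪰ μ I₉, where uᵢ(s) := bᵢ(s) ⊗ (R(s) aᵢ(s)) ∈ ℝ⁹. -/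
/-!
Write `S t = I₃ ⊗ R t`, an orthogonal matrix. Row `i` of `C s * (S s)ᵀ` is `uᵢ(s)ᵀ`, so with
`U s = ∑ᵢ uᵢ(s) uᵢ(s)ᵀ` the integrand of the Gramian is `(S t)ᵀ * U s * S t`. The outer factors do
not depend on `s`, hence `δ W(t, t+δ) = (S t)ᵀ * (∫ U) * S t`, and
`δ (W(t, t+δ) - μ I) = (S t)ᵀ * (∫ U - δ μ I) * S t`. Congruence by the orthogonal `S t` preserves
positive semidefiniteness in both directions, so (a) with `(δ, μ)` is the same as (b) with
`(δ, δ μ)`.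
-/

open Matrix
open scoped Kronecker

/-- The skew-symmetric matrix `[x]ₓ` associated to `x ∈ ℝ³`, satisfying
`[x]ₓ y = x × y` for the cross product `×`. -/
def skewMat (x : Fin 3 → ℝ) : Matrix (Fin 3) (Fin 3) ℝ :=
  !![0, -x 2, x 1; x 2, 0, -x 0; -x 1, x 0, 0]

/-- Constant matrix factors pull out of an entrywise interval integral. -/
lemma integral_conj_entry {n : Type*} [Fintype n] (P Q : Matrix n n ℝ) (X : ℝ → Matrix n n ℝ)
    (hX : ∀ i j, Continuous fun s => X s i j) (t₀ t₁ : ℝ) (p p' : n) :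
    ∫ s in t₀..t₁, (P * X s * Q) p p'
      = (P * Matrix.of (fun i j => ∫ s in t₀..t₁, X s i j) * Q) p p' := by
  simp only [Matrix.mul_apply, Matrix.of_apply]
  rw [intervalIntegral.integral_finsetSum]
  · refine Finset.sum_congr rfl fun j _ => ?_
    rw [intervalIntegral.integral_mul_const, intervalIntegral.integral_finsetSum]
    · simp only [intervalIntegral.integral_const_mul]
    · intro i _
      exact (continuous_const.mul (hX i j)).intervalIntegrable _ _
  · intro j _
    exact ((continuous_finsetSum _ fun i _ => continuous_const.mul (hX i j)).mul
      continuous_const).intervalIntegrable _ _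

/-- Congruence by the orthogonal `S` fixes multiples of the identity and preserves the
semidefinite order, so `W ⪰ μ I` and `M ⪰ δ μ I` say the same thing. -/
lemma posSemidef_conj_iff {n : Type*} [Fintype n] [DecidableEq n] (S M W : Matrix n n ℝ)
    (h1 : S * Sᵀ = 1) (h2 : Sᵀ * S = 1) (δ μ : ℝ) (hδ : 0 < δ)
    (hW : W = (1 / δ) • (Sᵀ * M * S)) :
    (W - μ • (1 : Matrix n n ℝ)).PosSemidef ↔ (M - (δ * μ) • (1 : Matrix n n ℝ)).PosSemidef := by
  have e1 : W - μ • (1 : Matrix n n ℝ)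
      = (1 / δ) • (Sᵀ * (M - (δ * μ) • (1 : Matrix n n ℝ)) * S) := by
    rw [hW, Matrix.mul_sub, Matrix.sub_mul, Matrix.mul_smul, Matrix.smul_mul, Matrix.mul_one, h2,
      smul_sub, smul_smul]
    congr 2
    field_simp
  have e2 : M - (δ * μ) • (1 : Matrix n n ℝ)
      = δ • (S * (W - μ • (1 : Matrix n n ℝ)) * Sᵀ) := by
    have e3 : ∀ N : Matrix n n ℝ, S * (Sᵀ * N * S) * Sᵀ = N := fun N => by
      calc S * (Sᵀ * N * S) * Sᵀ = (S * Sᵀ) * N * (S * Sᵀ) := by simp only [Matrix.mul_assoc]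
        _ = N := by rw [h1, Matrix.one_mul, Matrix.mul_one]
    rw [e1, Matrix.mul_smul, Matrix.smul_mul, e3, smul_smul, mul_one_div_cancel hδ.ne', one_smul]
  constructor
  · intro h
    rw [e2]
    have := (h.mul_mul_conjTranspose_same S).smul hδ.le
    rwa [Matrix.conjTranspose_eq_transpose_of_trivial] at this
  · intro h
    rw [e1]
    have := (h.conjTranspose_mul_mul_same S).smul (one_div_pos.2 hδ).le
    rwa [Matrix.conjTranspose_eq_transpose_of_trivial] at this

/-- Lemma 1: uniform observability of the pair `(A(·), C(·))` (Gramian condition (a))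
is equivalent to the persistent-excitation-type condition (b) on the vectors
`uᵢ(s) = bᵢ(s) ⊗ (R(s) aᵢ(s))`. -/
theorem stmt_4 (q : ℕ)
    (ω : ℝ → Fin 3 → ℝ) (hω : Continuous ω)
    (R : ℝ → Matrix (Fin 3) (Fin 3) ℝ)
    (hSO : ∀ t, R t * (R t)ᵀ = 1 ∧ (R t)ᵀ * R t = 1 ∧ (R t).det = 1)
    (hR : ∀ t, ∀ i j, HasDerivAt (fun s => R s i j) ((R t * skewMat (ω t)) i j) t)
    (a b : Fin q → ℝ → Fin 3 → ℝ)
    (ha : ∀ i, Continuous (a i)) (hb : ∀ i, Continuous (b i))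
    (C : ℝ → Matrix (Fin q) (Fin 3 × Fin 3) ℝ)
    (hC : ∀ t, ∀ i, ∀ p : Fin 3 × Fin 3, C t i p = b i t p.1 * a i t p.2)
    (φ : ℝ → ℝ → Matrix (Fin 3 × Fin 3) (Fin 3 × Fin 3) ℝ)
    (hφ : ∀ t s, φ t s = ((1 : Matrix (Fin 3) (Fin 3) ℝ) ⊗ₖ R t)ᵀ
        * ((1 : Matrix (Fin 3) (Fin 3) ℝ) ⊗ₖ R s))
    (u : Fin q → ℝ → Fin 3 × Fin 3 → ℝ)
    (hu : ∀ i, ∀ s, ∀ p : Fin 3 × Fin 3, u i s p = b i s p.1 * ((R s) *ᵥ (a i s)) p.2) :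
    (∃ δ > (0:ℝ), ∃ μ > (0:ℝ), ∀ t ≥ (0:ℝ),
        (Matrix.of (fun p p' : Fin 3 × Fin 3 =>
            (1/δ) * ∫ s in t..(t+δ), ((φ s t)ᵀ * (C s)ᵀ * C s * φ s t) p p')
          - μ • (1 : Matrix (Fin 3 × Fin 3) (Fin 3 × Fin 3) ℝ)).PosSemidef) ↔
    (∃ δ > (0:ℝ), ∃ μ > (0:ℝ), ∀ t ≥ (0:ℝ),
        (Matrix.of (fun p p' : Fin 3 × Fin 3 =>
            ∫ s in t..(t+δ), ∑ i : Fin q, u i s p * u i s p')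
          - μ • (1 : Matrix (Fin 3 × Fin 3) (Fin 3 × Fin 3) ℝ)).PosSemidef) := by
  have hRc : ∀ i j, Continuous fun s => R s i j := fun i j =>
    continuous_iff_continuousAt.2 fun t => (hR t i j).continuousAt
  have huc : ∀ i p, Continuous fun s => u i s p := by
    intro i p
    simp only [hu, Matrix.mulVec, dotProduct]
    exact ((continuous_apply p.1).comp (hb i)).mul
      (continuous_finsetSum _ fun j _ => (hRc p.2 j).mul ((continuous_apply j).comp (ha i)))
  have hS1 : ∀ t, ((1 : Matrix (Fin 3) (Fin 3) ℝ) ⊗ₖ R t)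
      * ((1 : Matrix (Fin 3) (Fin 3) ℝ) ⊗ₖ R t)ᵀ = 1 := fun t => by
    rw [← Matrix.kroneckerMap_transpose, ← Matrix.mul_kronecker_mul, (hSO t).1,
      Matrix.transpose_one, Matrix.mul_one, Matrix.one_kronecker_one]
  have hS2 : ∀ t, ((1 : Matrix (Fin 3) (Fin 3) ℝ) ⊗ₖ R t)ᵀ
      * ((1 : Matrix (Fin 3) (Fin 3) ℝ) ⊗ₖ R t) = 1 := fun t => by
    rw [← Matrix.kroneckerMap_transpose, ← Matrix.mul_kronecker_mul, (hSO t).2.1,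
      Matrix.transpose_one, Matrix.mul_one, Matrix.one_kronecker_one]
  -- The rows of `C s * (S s)ᵀ` are the vectors `uᵢ(s)`.
  have hCS : ∀ s, C s * ((1 : Matrix (Fin 3) (Fin 3) ℝ) ⊗ₖ R s)ᵀ
      = Matrix.of (fun i p => u i s p) := by
    intro s
    ext i p
    simp only [Matrix.mul_apply, Matrix.transpose_apply, Matrix.kroneckerMap_apply,
      Fintype.sum_prod_type, hC, Matrix.of_apply, hu, Matrix.mulVec, dotProduct, Matrix.one_apply,
      ite_mul, one_mul, zero_mul, mul_ite, mul_zero, Finset.sum_ite_irrel, Finset.sum_const_zero,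
      Finset.sum_ite_eq, Finset.mem_univ, if_true, Finset.mul_sum]
    exact Finset.sum_congr rfl fun j _ => by ring
  have hint : ∀ s t, (φ s t)ᵀ * (C s)ᵀ * C s * φ s t
      = ((1 : Matrix (Fin 3) (Fin 3) ℝ) ⊗ₖ R t)ᵀ
        * Matrix.of (fun p p' => ∑ i, u i s p * u i s p')
        * ((1 : Matrix (Fin 3) (Fin 3) ℝ) ⊗ₖ R t) := by
    intro s t
    have hU : Matrix.of (fun p p' => ∑ i, u i s p * u i s p')
        = (C s * ((1 : Matrix (Fin 3) (Fin 3) ℝ) ⊗ₖ R s)ᵀ)ᵀ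
          * (C s * ((1 : Matrix (Fin 3) (Fin 3) ℝ) ⊗ₖ R s)ᵀ) := by
      rw [hCS]
      ext p p'
      simp [Matrix.mul_apply]
    rw [hU, hφ]
    simp only [Matrix.transpose_mul, Matrix.transpose_transpose, Matrix.mul_assoc]
  have key : ∀ δ > (0:ℝ), ∀ μ t : ℝ,
      (Matrix.of (fun p p' : Fin 3 × Fin 3 =>
            (1/δ) * ∫ s in t..(t+δ), ((φ s t)ᵀ * (C s)ᵀ * C s * φ s t) p p')
          - μ • (1 : Matrix (Fin 3 × Fin 3) (Fin 3 × Fin 3) ℝ)).PosSemidef ↔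
      (Matrix.of (fun p p' : Fin 3 × Fin 3 =>
            ∫ s in t..(t+δ), ∑ i : Fin q, u i s p * u i s p')
          - (δ * μ) • (1 : Matrix (Fin 3 × Fin 3) (Fin 3 × Fin 3) ℝ)).PosSemidef := by
    intro δ hδ μ t
    refine posSemidef_conj_iff ((1 : Matrix (Fin 3) (Fin 3) ℝ) ⊗ₖ R t) _ _ (hS1 t) (hS2 t) δ μ hδ ?_
    ext p p'
    simp only [hint, Matrix.of_apply, Matrix.smul_apply, smul_eq_mul]
    rw [integral_conj_entry _ _ (fun s => Matrix.of (fun p p' => ∑ i, u i s p * u i s p'))]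
    · rfl
    · intro p p'
      simp only [Matrix.of_apply]
      exact continuous_finsetSum _ fun i _ => (huc i p).mul (huc i p')
  constructor
  · rintro ⟨δ, hδ, μ, hμ, h⟩
    exact ⟨δ, hδ, δ * μ, mul_pos hδ hμ, fun t ht => (key δ hδ μ t).1 (h t ht)⟩
  · rintro ⟨δ, hδ, μ, hμ, h⟩
    refine ⟨δ, hδ, μ / δ, div_pos hμ hδ, fun t ht => (key δ hδ _ t).2 ?_⟩
    rw [mul_div_cancel₀ _ hδ.ne']
    exact h t ht
end

section
/- (Lemma 2) Let ω : ℝ → ℝ³ be continuous, let R : ℝ → SO(3) be differentiable with Ṙ(t) = R(t)[ω(t)]×, and let r₁, …, r_m : ℝ → ℝ³ be continuous. Define A(t) := −(I₃ ⊗ [ω(t)]×) and let C(t) be the 3m×9 matrix whose rows are bᵢ(t)ᵀ ⊗ aᵢᵀ with b_{3j−2} = b_{3j−1} = b_{3j} = r_j and a_{i+3(j−1)} = e_i for i ∈ {1,2,3}, j ∈ {1,…,m}. Let φ(t,s) := (I₃ ⊗ R(t))ᵀ (I₃ ⊗ R(s)). Then there exist δ, μ > 0 such that for every t ≥ 0 the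 observability Gramian W(t, t+δ) := (1/δ) ∫_t^{t+δ} φ(s,t)ᵀ C(s)ᵀ C(s) φ(s,t) ds satisfies W(t, t+δ) ⪰ μ I₉ if and only if there exist δ′, μ′ > 0 such that for every t ≥ 0, ∫_t^{t+δ′} Σ_{j=1}^{m} r_j(s) r_j(s)ᵀ ds ⪰ μ′ I₃. -/
/-!
The matrix `C(s)ᵀ C(s)` equals `S(s) ⊗ I₃` with `S(s) = ∑ⱼ rⱼ(s) rⱼ(s)ᵀ`, while
`φ(s,t) = I₃ ⊗ (R(s)ᵀ R(t))`, whose second factor is orthogonal. The mixed-product property of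
the Kronecker product therefore makes the rotation cancel (`transition_conj`), and the Gramian is
`W(t, t+δ) = (1/δ) (∫ S) ⊗ I₃`. Since `M ⊗ I₃ ⪰ 0` if and only if `M ⪰ 0`
(`posSemidef_kronecker_one_iff`), the two conditions are equivalent with `δ' = δ` and `μ' = δ μ`.
-/

open Matrix
open scoped Kronecker

theorem posSemidef_kronecker_one_iff (M : Matrix (Fin 3) (Fin 3) ℝ) :
    (M ⊗ₖ (1 : Matrix (Fin 3) (Fin 3) ℝ)).PosSemidef ↔ M.PosSemidef := by
  constructor
  · intro h
    -- `M` is the principal submatrix of `M ⊗ I₃` on the indices `(i, 0)`.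
    have h0 := h.submatrix (fun i : Fin 3 => (i, (0 : Fin 3)))
    convert h0 using 1
    ext i k
    simp
  · intro h
    exact h.kronecker Matrix.PosSemidef.one

theorem output_gram {m : ℕ} (v : Fin m → Fin 3 → ℝ)
    (C : Matrix (Fin m × Fin 3) (Fin 3 × Fin 3) ℝ)
    (hC : ∀ j : Fin m, ∀ i : Fin 3, ∀ p : Fin 3 × Fin 3,
      C (j, i) p = v j p.1 * (Pi.single i 1 : Fin 3 → ℝ) p.2) :
    Cᵀ * C = (∑ j : Fin m, vecMulVec (v j) (v j)) ⊗ₖ (1 : Matrix (Fin 3) (Fin 3) ℝ) := by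
  ext ⟨a, b⟩ ⟨c, d⟩
  simp only [mul_apply, transpose_apply, kroneckerMap_apply, Matrix.sum_apply, vecMulVec_apply,
    Fintype.sum_prod_type, hC, Finset.sum_mul]
  refine Finset.sum_congr rfl fun j _ => ?_
  simp [Pi.single_apply, Matrix.one_apply]

/-- Conjugating `S ⊗ I₃` by the transition matrix leaves it unchanged: the rotations `P`, `Q` act
only on the second Kronecker factor, where they meet the identity. -/
theorem transition_conj (S P Q : Matrix (Fin 3) (Fin 3) ℝ) (hP : P * Pᵀ = 1) (hQ : Qᵀ * Q = 1) :
    (((1 : Matrix (Fin 3) (Fin 3) ℝ) ⊗ₖ P)ᵀ * ((1 : Matrix (Fin 3) (Fin 3) ℝ) ⊗ₖ Q))ᵀ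
      * (S ⊗ₖ (1 : Matrix (Fin 3) (Fin 3) ℝ))
      * (((1 : Matrix (Fin 3) (Fin 3) ℝ) ⊗ₖ P)ᵀ * ((1 : Matrix (Fin 3) (Fin 3) ℝ) ⊗ₖ Q))
      = S ⊗ₖ (1 : Matrix (Fin 3) (Fin 3) ℝ) := by
  have hPQ : Qᵀ * P * (Pᵀ * Q) = 1 := by
    rw [Matrix.mul_assoc, ← Matrix.mul_assoc P, hP, Matrix.one_mul, hQ]
  have hT (X : Matrix (Fin 3) (Fin 3) ℝ) :
      ((1 : Matrix (Fin 3) (Fin 3) ℝ) ⊗ₖ X)ᵀ = 1 ⊗ₖ Xᵀ := by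
    rw [← kroneckerMap_transpose, transpose_one]
  simp only [← mul_kronecker_mul, hT, transpose_mul, transpose_transpose, Matrix.one_mul,
    Matrix.mul_one, hPQ]

/-- Lemma 2: for `m` vector measurements (rows of `C(t)` given by `rⱼ(t)ᵀ ⊗ eᵢᵀ`),
uniform observability of `(A(·), C(·))` is equivalent to the persistency-of-excitation
condition on the inertial vectors `rⱼ`. -/
theorem stmt_7 (m : ℕ)
    (ω : ℝ → Fin 3 → ℝ) (hω : Continuous ω)
    (R : ℝ → Matrix (Fin 3) (Fin 3) ℝ)
    (hSO : ∀ t, R t * (R t)ᵀ = 1 ∧ (R t)ᵀ * R t = 1 ∧ (R t).det = 1)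
    (hR : ∀ t, ∀ i j, HasDerivAt (fun s => R s i j) ((R t * skewMat (ω t)) i j) t)
    (r : Fin m → ℝ → Fin 3 → ℝ) (hr : ∀ j, Continuous (r j))
    (C : ℝ → Matrix (Fin m × Fin 3) (Fin 3 × Fin 3) ℝ)
    (hC : ∀ t, ∀ j : Fin m, ∀ i : Fin 3, ∀ p : Fin 3 × Fin 3,
      C t (j, i) p = r j t p.1 * (Pi.single i 1 : Fin 3 → ℝ) p.2)
    (φ : ℝ → ℝ → Matrix (Fin 3 × Fin 3) (Fin 3 × Fin 3) ℝ)
    (hφ : ∀ t s, φ t s = ((1 : Matrix (Fin 3) (Fin 3) ℝ) ⊗ₖ R t)ᵀ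
        * ((1 : Matrix (Fin 3) (Fin 3) ℝ) ⊗ₖ R s)) :
    (∃ δ > (0:ℝ), ∃ μ > (0:ℝ), ∀ t ≥ (0:ℝ),
        (Matrix.of (fun p p' : Fin 3 × Fin 3 =>
            (1/δ) * ∫ s in t..(t+δ), ((φ s t)ᵀ * (C s)ᵀ * C s * φ s t) p p')
          - μ • (1 : Matrix (Fin 3 × Fin 3) (Fin 3 × Fin 3) ℝ)).PosSemidef) ↔
    (∃ δ' > (0:ℝ), ∃ μ' > (0:ℝ), ∀ t ≥ (0:ℝ),
        (Matrix.of (fun i k : Fin 3 =>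
            ∫ s in t..(t+δ'), (∑ j : Fin m, vecMulVec (r j s) (r j s)) i k)
          - μ' • (1 : Matrix (Fin 3) (Fin 3) ℝ)).PosSemidef) := by
  have hint (s t : ℝ) : (φ s t)ᵀ * (C s)ᵀ * C s * φ s t
      = (∑ j : Fin m, vecMulVec (r j s) (r j s)) ⊗ₖ (1 : Matrix (Fin 3) (Fin 3) ℝ) := by
    rw [Matrix.mul_assoc _ (C s)ᵀ, output_gram (fun j => r j s) (C s) (hC s), hφ]
    exact transition_conj _ _ _ (hSO s).1 (hSO t).2.1
  have key (δ μ t : ℝ) (hδ : 0 < δ) :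
      (Matrix.of (fun p p' : Fin 3 × Fin 3 =>
            (1/δ) * ∫ s in t..(t+δ), ((φ s t)ᵀ * (C s)ᵀ * C s * φ s t) p p')
          - μ • (1 : Matrix (Fin 3 × Fin 3) (Fin 3 × Fin 3) ℝ)).PosSemidef ↔
      (Matrix.of (fun i k : Fin 3 =>
            ∫ s in t..(t+δ), (∑ j : Fin m, vecMulVec (r j s) (r j s)) i k)
          - (δ * μ) • (1 : Matrix (Fin 3) (Fin 3) ℝ)).PosSemidef := by
    set M : Matrix (Fin 3) (Fin 3) ℝ := Matrix.of (fun i k : Fin 3 =>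
      ∫ s in t..(t+δ), (∑ j : Fin m, vecMulVec (r j s) (r j s)) i k) with hM
    have hW : Matrix.of (fun p p' : Fin 3 × Fin 3 =>
            (1/δ) * ∫ s in t..(t+δ), ((φ s t)ᵀ * (C s)ᵀ * C s * φ s t) p p')
          - μ • (1 : Matrix (Fin 3 × Fin 3) (Fin 3 × Fin 3) ℝ)
        = (δ⁻¹ • (M - (δ * μ) • (1 : Matrix (Fin 3) (Fin 3) ℝ))) ⊗ₖ
            (1 : Matrix (Fin 3) (Fin 3) ℝ) := by
      rw [← one_kronecker_one]
      ext p p'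
      simp only [hint, hM, Matrix.sub_apply, Matrix.smul_apply, Matrix.of_apply,
        kroneckerMap_apply, intervalIntegral.integral_mul_const, smul_eq_mul]
      field_simp
    rw [hW, posSemidef_kronecker_one_iff]
    constructor
    · intro h
      have h' := h.smul hδ.le
      rwa [smul_smul, mul_inv_cancel₀ hδ.ne', one_smul] at h'
    · intro h
      exact h.smul (inv_nonneg.2 hδ.le)
  constructor
  · rintro ⟨δ, hδ, μ, hμ, h⟩
    exact ⟨δ, hδ, δ * μ, mul_pos hδ hμ, fun t ht => (key δ μ t hδ).1 (h t ht)⟩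
  · rintro ⟨δ, hδ, μ, hμ, h⟩
    refine ⟨δ, hδ, μ / δ, div_pos hμ hδ, fun t ht => (key δ (μ / δ) t hδ).2 ?_⟩
    rw [mul_div_cancel₀ μ hδ.ne']
    exact h t ht
end
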